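/- If R → T is a G-Galois extension of commutative rings with G a finite group, then T, regarded as a module over the group algebra R[G] via the action r·g ↦ (t ↦ r·g(t)), is a finitely generated projective R[G]-module. -/

import Mathlib

/-!
The surjectivity of `h : T ⊗[R] T → ∏ T` provides finitely many `xᵢ, yᵢ ∈ T` with
`∑ xᵢ * g • yᵢ = δ_{g,1}` (`exists_galois_coordinates`). Writing `tr : T → R` for the trace
`t ↦ ∑ g • t`, which lands in `T^G = R`, this gives `s = ∑ tr (yᵢ * s) • xᵢ` for all `s`
(`sum_trace_smul`), so the `xᵢ` and `tr (yᵢ * ·)` form a dual basis of `T` over `R`. In particular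
`T` is finite and `T = I T` for the ideal `I = tr T`, and since `T` is faithful over `R`, Nakayama's
lemma forces `I = R`: some `c` has `tr c = 1` (`exists_trace_eq_one`).

Averaging the dual basis against `c` makes it `R[G]`-linear: the maps
`fᵢ t = ∑_g tr (yᵢ * c * g⁻¹ • t) · g` from `T` to `R[G]` satisfy
`∑ fᵢ t • xᵢ = ∑_g g • (c * g⁻¹ • t) = tr c • t = t`, so `T` is a direct summand of a finite free
`R[G]`-module.
-/

open scoped TensorProduct

/-- A `G`-Galois extension of commutative rings: the structure map `R → T` is injective with
image exactly the fixed subring `T^G`, and the canonical map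
`h : T ⊗[R] T → ∏_{g ∈ G} T`, `t₁ ⊗ t₂ ↦ (t₁ * g • t₂)_g`, is bijective. -/
def IsGaloisRingExtension (R T G : Type*) [CommRing R] [CommRing T] [Algebra R T]
    [Group G] [Finite G] [MulSemiringAction G T] : Prop :=
  Function.Injective (algebraMap R T) ∧
  Set.range (algebraMap R T) = {t : T | ∀ g : G, g • t = t} ∧
  ∃ h : (T ⊗[R] T) →+* (G → T),
    (∀ t₁ t₂ : T, h (t₁ ⊗ₜ[R] t₂) = fun g => t₁ * g • t₂) ∧ Function.Bijective h

namespace IsGaloisRingExtension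

variable {R T G : Type*} [CommRing R] [CommRing T] [Algebra R T]
    [Group G] [MulSemiringAction G T]

lemma smul_algebraMap [Finite G] (hGal : IsGaloisRingExtension R T G) (g : G) (r : R) :
    g • algebraMap R T r = algebraMap R T r := by
  have h : algebraMap R T r ∈ {t : T | ∀ g : G, g • t = t} := hGal.2.1 ▸ Set.mem_range_self r
  exact h g

lemma smul_comm_base [Finite G] (hGal : IsGaloisRingExtension R T G) (g : G) (r : R) (t : T) :
    g • (r • t) = r • (g • t) := by
  rw [Algebra.smul_def, Algebra.smul_def, smul_mul', hGal.smul_algebraMap]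

/-- A preimage of the indicator function of `1 : G` under `h`, written as a sum of pure
tensors. -/
lemma exists_galois_coordinates [Finite G] [DecidableEq G]
    (hGal : IsGaloisRingExtension R T G) :
    ∃ S : Finset (T × T), ∀ g : G, ∑ i ∈ S, i.1 * g • i.2 = if g = 1 then 1 else 0 := by
  obtain ⟨-, -, h, hh, -, hsurj⟩ := hGal
  obtain ⟨z, hz⟩ := hsurj (fun g => if g = 1 then 1 else 0)
  obtain ⟨S, rfl⟩ := TensorProduct.exists_finset z
  refine ⟨S, fun g => ?_⟩
  have := congrFun hz g
  simpa [map_sum, hh] using this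

/-- The trace `t ↦ ∑ g • t`, with values taken in `R` rather than in `T^G`. -/
lemma exists_trace [Fintype G] (hGal : IsGaloisRingExtension R T G) :
    ∃ tr : T →ₗ[R] R, ∀ t : T, algebraMap R T (tr t) = ∑ g : G, g • t := by
  have hex (t : T) : ∃ r : R, algebraMap R T r = ∑ g : G, g • t := by
    have h : ∑ g : G, g • t ∈ {t : T | ∀ g : G, g • t = t} := by
      intro k
      rw [Finset.smul_sum]
      simp only [smul_smul]
      exact Fintype.sum_equiv (Equiv.mulLeft k) _ _ fun _ => rfl
    rwa [← hGal.2.1] at h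
  choose tr htr using hex
  refine ⟨{ toFun := tr, map_add' := fun a b => hGal.1 ?_, map_smul' := fun r a => hGal.1 ?_ }, htr⟩
  · simp [htr, Finset.sum_add_distrib]
  · simp [htr, hGal.smul_comm_base, Finset.smul_sum, ← Algebra.smul_def]

/-- The dual basis property of Galois coordinates with respect to the trace form. -/
lemma sum_trace_smul [Fintype G] [DecidableEq G] {tr : T →ₗ[R] R}
    (htr : ∀ t : T, algebraMap R T (tr t) = ∑ g : G, g • t) {S : Finset (T × T)}
    (hS : ∀ g : G, ∑ i ∈ S, i.1 * g • i.2 = if g = 1 then 1 else 0) (s : T) :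
    ∑ i ∈ S, tr (i.2 * s) • i.1 = s := by
  calc ∑ i ∈ S, tr (i.2 * s) • i.1
      = ∑ i ∈ S, ∑ g : G, (i.1 * g • i.2) * g • s := by
        refine Finset.sum_congr rfl fun i _ => ?_
        rw [Algebra.smul_def, htr, Finset.sum_mul]
        refine Finset.sum_congr rfl fun g _ => ?_
        rw [smul_mul']
        ring
    _ = ∑ g : G, (if g = 1 then 1 else 0) * g • s := by
        rw [Finset.sum_comm]
        simp_rw [← Finset.sum_mul, hS]
    _ = s := by simp

/-- The trace is surjective: its image `I` satisfies `T = I T`, and Nakayama's lemma applies to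
the finite faithful `R`-module `T`. -/
lemma exists_trace_eq_one [Fintype G] [DecidableEq G] (hinj : Function.Injective (algebraMap R T))
    {tr : T →ₗ[R] R} (htr : ∀ t : T, algebraMap R T (tr t) = ∑ g : G, g • t) {S : Finset (T × T)}
    (hS : ∀ g : G, ∑ i ∈ S, i.1 * g • i.2 = if g = 1 then 1 else 0) :
    ∃ c : T, tr c = 1 := by
  classical
  have hfg : (⊤ : Submodule R T).FG := by
    refine ⟨S.image Prod.fst, eq_top_iff.2 fun s _ => ?_⟩
    rw [← sum_trace_smul htr hS s]
    exact Submodule.sum_mem _ fun i hi => Submodule.smul_mem _ _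
      (Submodule.subset_span (Finset.mem_coe.2 (Finset.mem_image_of_mem _ hi)))
  let I : Ideal R := LinearMap.range tr
  have hle : (⊤ : Submodule R T) ≤ I • ⊤ := by
    intro s _
    rw [← sum_trace_smul htr hS s]
    exact Submodule.sum_mem _ fun i _ =>
      Submodule.smul_mem_smul (LinearMap.mem_range_self tr _) Submodule.mem_top
  obtain ⟨r, hr, hr0⟩ := Submodule.exists_sub_one_mem_and_smul_eq_zero_of_fg_of_le_smul I ⊤ hfg hle
  have hr_zero : r = 0 := hinj (by
    simpa [Algebra.smul_def] using hr0 1 Submodule.mem_top)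
  obtain ⟨c, hc⟩ := hr
  -- `r = 0`, so `r - 1 = tr c` reads `tr c = -1`.
  exact ⟨-c, by simp [hc, hr_zero]⟩

/-- The `R[G]`-linear map `t ↦ ∑_g φ (g⁻¹ • t) · g` attached to an `R`-linear form `φ` on `T`. -/
noncomputable def coinduce [Fintype G] [Module (MonoidAlgebra R G) T]
    (hcompat : ∀ (r : R) (g : G) (t : T),
      (MonoidAlgebra.single g r : MonoidAlgebra R G) • t = r • (g • t))
    (hGal : IsGaloisRingExtension R T G) (φ : T →ₗ[R] R) :
    T →ₗ[MonoidAlgebra R G] MonoidAlgebra R G where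
  toFun t := ∑ g : G, MonoidAlgebra.single g (φ (g⁻¹ • t))
  map_add' a b := by
    simp [MonoidAlgebra.single_add, Finset.sum_add_distrib]
  map_smul' a t := by
    induction a using MonoidAlgebra.induction_linear with
    | zero => simp
    | add a b ha hb =>
      simp only [RingHom.id_apply] at ha hb ⊢
      rw [add_smul, add_smul, ← ha, ← hb, ← Finset.sum_add_distrib]
      simp [MonoidAlgebra.single_add]
    | single k r =>
      rw [RingHom.id_apply, smul_eq_mul, Finset.mul_sum, hcompat]
      refine (Fintype.sum_equiv (Equiv.mulLeft k) _ _ fun g => ?_).symm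
      simp [MonoidAlgebra.single_mul_single, hGal.smul_comm_base, smul_smul]

end IsGaloisRingExtension

/-- For a finite `G`-Galois extension `R → T` of commutative rings, `T` regarded as a
module over the group algebra `R[G]` (with `r·g` acting as `t ↦ r · g(t)`) is a finitely
generated projective `R[G]`-module. -/
theorem galois_ring_extension_projective_over_group_algebra
    {R T G : Type*} [CommRing R] [CommRing T] [Algebra R T]
    [Group G] [Finite G] [MulSemiringAction G T]
    [Module (MonoidAlgebra R G) T]
    (hGal : IsGaloisRingExtension R T G)
    (hcompat : ∀ (r : R) (g : G) (t : T),
      (MonoidAlgebra.single g r : MonoidAlgebra R G) • t = r • (g • t)) :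
    Module.Finite (MonoidAlgebra R G) T ∧ Module.Projective (MonoidAlgebra R G) T := by
  classical
  cases nonempty_fintype G
  obtain ⟨S, hS⟩ := hGal.exists_galois_coordinates
  obtain ⟨tr, htr⟩ := hGal.exists_trace
  obtain ⟨c, hc⟩ := IsGaloisRingExtension.exists_trace_eq_one hGal.1 htr hS
  let f : T →ₗ[MonoidAlgebra R G] (S → MonoidAlgebra R G) := LinearMap.pi fun i =>
    IsGaloisRingExtension.coinduce hcompat hGal (tr ∘ₗ LinearMap.mulLeft R (i.1.2 * c))
  let p : (S → MonoidAlgebra R G) →ₗ[MonoidAlgebra R G] T :=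
    Fintype.linearCombination (MonoidAlgebra R G) fun i : S => i.1.1
  have hpf : p ∘ₗ f = LinearMap.id := by
    ext t
    calc p (f t)
        = ∑ i : S, ∑ g : G, g • (tr (i.1.2 * (c * g⁻¹ • t)) • i.1.1) := by
          simp [p, f, IsGaloisRingExtension.coinduce, Fintype.linearCombination_apply,
            Finset.sum_smul, hcompat, hGal.smul_comm_base]
      _ = ∑ g : G, g • ∑ i ∈ S, tr (i.2 * (c * g⁻¹ • t)) • i.1 := by
          rw [Finset.sum_comm]
          refine Finset.sum_congr rfl fun g _ => ?_
          rw [← Finset.smul_sum,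
            Finset.sum_coe_sort S fun i => tr (i.2 * (c * g⁻¹ • t)) • i.1]
      _ = ∑ g : G, (g • c) * t := by
          simp [IsGaloisRingExtension.sum_trace_smul htr hS, smul_mul']
      _ = t := by rw [← Finset.sum_mul, ← htr, hc, map_one, one_mul]
  exact ⟨Module.Finite.of_surjective p fun t => ⟨f t, LinearMap.congr_fun hpf t⟩,
    Module.Projective.of_split f p hpf⟩
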